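/- Let G be a 3-connected signed graph that is unbalanced (contains a negative cycle). Then G has a negative peripheral cycle, i.e., an induced negative cycle C such that G − V(C) is connected. -/

import Mathlib

open SimpleGraph

/-- `G` is 3-connected: at least 4 vertices, and deleting any set of at most
two vertices leaves a connected graph. -/
def ThreeConnected {V : Type*} [Fintype V] [DecidableEq V] (G : SimpleGraph V) : Prop :=
  4 ≤ Fintype.card V ∧
  ∀ S : Finset V, S.card ≤ 2 → (G.induce {x | x ∉ S}).Connected

/-- A cycle (closed walk that is a cycle) is negative when it carries an odd
number of negative edges; `σ e = false` means `e` is negative. -/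
def NegativeCycle {V : Type*} (G : SimpleGraph V) (σ : Sym2 V → Bool)
    {v : V} (c : G.Walk v v) : Prop :=
  c.IsCycle ∧ Odd (c.edges.countP fun e => !σ e)

/-!
Among the connected vertex sets `B` whose complement still carries a negative closed walk, take a
maximal one, and let `∂B` be its outer boundary. By maximality every negative closed walk of `G - B`
passes through all of `∂B`. If some vertex `w` were outside `B ∪ ∂B`, then 3-connectivity would give
walks in `G - B` from `w` to three vertices of `∂B`; these split a negative cycle of `G - B` into
three arcs, and closing up each arc through `w` gives three closed walks, each missing one of the
three vertices. Their signs multiply to that of the cycle, so one of them is negative: a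
contradiction. Hence a shortest negative closed walk of `G - B`, which is a chordless cycle, has
vertex set exactly the complement of `B`.
-/

section

variable {V : Type*} {G : SimpleGraph V} {σ : Sym2 V → Bool}

/-- The number of negative edges of a walk, counted with multiplicity. Its parity encodes the sign
of the walk, so a negative closed walk is one with `Odd (negCount σ c)`. -/
def negCount (σ : Sym2 V → Bool) {u v : V} (p : G.Walk u v) : ℕ :=
  p.edges.countP fun e => !σ e

lemma negCount_append {u v w : V} (p : G.Walk u v) (q : G.Walk v w) :
    negCount σ (p.append q) = negCount σ p + negCount σ q := by
  simp only [negCount, Walk.edges_append, List.countP_append]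

lemma negCount_reverse {u v : V} (p : G.Walk u v) : negCount σ p.reverse = negCount σ p := by
  simp only [negCount, Walk.edges_reverse, List.countP_reverse]

lemma negCount_eq_of_edges_perm {u v u' v' : V} {p : G.Walk u v} {q : G.Walk u' v'}
    (h : p.edges.Perm q.edges) : negCount σ p = negCount σ q :=
  h.countP_eq _

/-- The signed graph induced on `X` is unbalanced. Closed walks are used in place of cycles because
they can be concatenated freely; a shortest negative closed walk is a cycle, see
`IsShortestNegativeOn.isCycle`. -/
def UnbalancedOn (G : SimpleGraph V) (σ : Sym2 V → Bool) (X : Set V) : Prop :=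
  ∃ (u : V) (c : G.Walk u u), Odd (negCount σ c) ∧ ∀ x ∈ c.support, x ∈ X

/-- `c` is a shortest negative closed walk among those with all vertices in `X`. -/
structure IsShortestNegativeOn (σ : Sym2 V → Bool) (X : Set V) {v : V} (c : G.Walk v v) :
    Prop where
  odd : Odd (negCount σ c)
  support_mem : ∀ x ∈ c.support, x ∈ X
  length_le : ∀ (u : V) (d : G.Walk u u), Odd (negCount σ d) → (∀ x ∈ d.support, x ∈ X) →
    c.length ≤ d.length

lemma UnbalancedOn.exists_isShortestNegativeOn {X : Set V} (h : UnbalancedOn G σ X) :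
    ∃ (v : V) (c : G.Walk v v), IsShortestNegativeOn σ X c := by
  obtain ⟨u, c, hodd, hc⟩ := h
  obtain ⟨⟨v, d⟩, ⟨hd, hdX⟩, hmin⟩ := exists_minimalFor_of_wellFoundedLT
    (fun c : Σ u, G.Walk u u => Odd (negCount σ c.2) ∧ ∀ x ∈ c.2.support, x ∈ X)
    (fun c => c.2.length) ⟨⟨u, c⟩, hodd, hc⟩
  refine ⟨v, d, hd, hdX, fun u' d' hd' hdX' => ?_⟩
  exact (le_total _ _).elim id (hmin (j := ⟨u', d'⟩) ⟨hd', hdX'⟩)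

namespace IsShortestNegativeOn

variable {X : Set V} {v : V} {c : G.Walk v v}

lemma rotate [DecidableEq V] (hc : IsShortestNegativeOn σ X c) {u : V} (hu : u ∈ c.support) :
    IsShortestNegativeOn σ X (c.rotate u hu) where
  odd := negCount_eq_of_edges_perm (c.rotate_edges u hu).perm ▸ hc.odd
  support_mem x hx := hc.support_mem x ((c.mem_support_rotate_iff u hu).1 hx)
  length_le u' d hd hdX := c.length_rotate u hu ▸ hc.length_le u' d hd hdX

lemma length_le_of_detour {x y : V} {a : G.Walk v x} {p : G.Walk x y} {b : G.Walk y v}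
    (hc : IsShortestNegativeOn σ X (a.append (p.append b))) (r : G.Walk x y)
    (hr : ∀ z ∈ r.support, z ∈ X) :
    p.length ≤ r.length ∨ a.length + b.length ≤ r.length := by
  have hX := hc.support_mem
  have hodd := hc.odd
  simp only [Walk.mem_support_append_iff] at hX
  rw [negCount_append, negCount_append] at hodd
  by_cases hreplaced : Odd (negCount σ (a.append (r.append b)))
  · have hle := hc.length_le _ _ hreplaced (by simp only [Walk.mem_support_append_iff]; grind)
    simp only [Walk.length_append] at hle
    lia
  · have hclosed : Odd (negCount σ (p.append r.reverse)) := by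
      simp only [negCount_append, negCount_reverse] at hreplaced ⊢
      grind
    have hle := hc.length_le _ _ hclosed (by
      simp only [Walk.mem_support_append_iff, Walk.support_reverse, List.mem_reverse]; grind)
    simp only [Walk.length_append, Walk.length_reverse] at hle
    lia

lemma three_le_length (hc : IsShortestNegativeOn σ X c) : 3 ≤ c.length := by
  have hodd := hc.odd
  rcases c with _ | ⟨h, _ | ⟨h', _ | ⟨h'', p⟩⟩⟩
  · simp [negCount] at hodd
  · exact absurd h (G.loopless.irrefl _)
  · simp only [negCount, Walk.edges_cons, Walk.edges_nil, Sym2.eq_swap (a := v),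
      List.countP_cons, List.countP_nil, zero_add] at hodd
    grind
  · simp only [Walk.length_cons]
    lia

lemma isCycle (hc : IsShortestNegativeOn σ X c) : c.IsCycle := by
  refine Walk.isCycle_iff_isPath_tail_and_le_length.2 ⟨?_, hc.three_le_length⟩
  rw [Walk.isPath_iff_isSubwalk_imp_nil]
  rintro x d ⟨a, b, htail⟩
  have hnil : ¬ c.Nil := by
    have := hc.three_le_length
    rw [← Walk.length_eq_zero_iff]
    lia
  have hsplit : c = (Walk.cons (c.adj_snd hnil) a).append (d.append b) := by
    rw [Walk.cons_append, Walk.append_assoc, ← htail, Walk.cons_tail_eq _ hnil]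
  have hx : x ∈ X := hc.support_mem x (by rw [hsplit]; simp [Walk.mem_support_append_iff])
  have hdetour := (hsplit ▸ hc).length_le_of_detour Walk.nil (by simpa using hx)
  simp only [Walk.length_nil, Walk.length_cons] at hdetour
  exact Walk.length_eq_zero_iff.1 (by lia)

end IsShortestNegativeOn

lemma mem_edges_of_length_le_one {u v : V} {p : G.Walk u v} (huv : u ≠ v) (hp : p.length ≤ 1) :
    s(u, v) ∈ p.edges := by
  rcases p with _ | ⟨h, _ | ⟨h', p⟩⟩
  · exact absurd rfl huv
  · simp
  · simp at hp

lemma IsShortestNegativeOn.isChordless {X : Set V} {v : V} {c : G.Walk v v}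
    (hc : IsShortestNegativeOn σ X c) : c.IsChordless := by
  classical
  rw [Walk.isChordless_iff_forall_mem_edges]
  intro u w hu hw huw
  rw [← (c.rotate_edges u hu).mem_iff]
  obtain ⟨p, q, hpq⟩ := Walk.mem_support_iff_exists_append.1
    ((c.mem_support_rotate_iff u hu).2 hw)
  have hdetour := length_le_of_detour (a := Walk.nil) (hpq ▸ hc.rotate hu) huw.toWalk
    (by simpa using ⟨hc.support_mem u hu, hc.support_mem w hw⟩)
  rw [hpq, Walk.edges_append, List.mem_append]
  rcases hdetour with hp | hq
  · exact Or.inl (mem_edges_of_length_le_one huw.ne hp)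
  · exact Or.inr (Sym2.eq_swap ▸ mem_edges_of_length_le_one huw.ne' (by simpa using hq))

lemma exists_walk_of_preconnected_induce {X : Set V} (hX : (G.induce X).Preconnected) {a b : V}
    (ha : a ∈ X) (hb : b ∈ X) : ∃ q : G.Walk a b, ∀ x ∈ q.support, x ∈ X := by
  obtain ⟨q⟩ := hX ⟨a, ha⟩ ⟨b, hb⟩
  refine ⟨q.map (Embedding.induce X).toHom, fun x hx => ?_⟩
  obtain ⟨y, -, rfl⟩ := List.mem_map.1 (Walk.support_map _ q ▸ hx)
  exact y.2

namespace ThreeConnected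

variable [Fintype V] [DecidableEq V]

lemma connected_induce_compl (h3 : ThreeConnected G) {S : Set V} (hS : S.ncard ≤ 2) :
    (G.induce Sᶜ).Connected := by
  classical
  have hcard : S.toFinset.card ≤ 2 := by rwa [← Set.ncard_eq_toFinset_card']
  have hcoe : {x | x ∉ S.toFinset} = Sᶜ := by
    ext x
    simp only [Set.mem_ofPred_eq, Set.mem_toFinset, Set.mem_compl_iff]
  exact hcoe ▸ h3.2 S.toFinset hcard

lemma two_lt_ncard_neighborSet (h3 : ThreeConnected G) (v : V) : 2 < (G.neighborSet v).ncard := by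
  by_contra! hle
  have hv : v ∈ (G.neighborSet v)ᶜ := G.loopless.irrefl v
  obtain ⟨x, hx, hxv⟩ : ∃ x ∈ (G.neighborSet v)ᶜ, x ≠ v := by
    refine Set.exists_ne_of_one_lt_ncard ?_ v
    have := Set.ncard_add_ncard_compl (G.neighborSet v)
    have := h3.1
    rw [Nat.card_eq_fintype_card] at *
    lia
  obtain ⟨q, hq⟩ :=
    exists_walk_of_preconnected_induce (h3.connected_induce_compl hle).preconnected hv hx
  have hnil : ¬ q.Nil := Walk.not_nil_of_ne hxv.symm
  exact hq _ (q.getVert_mem_support 1) (q.adj_snd hnil)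

lemma exists_notMem_support (h3 : ThreeConnected G) {v : V} {c : G.Walk v v} (hc : c.IsCycle)
    (hchord : c.IsChordless) : ∃ z, z ∉ c.support := by
  by_contra! hspan
  have hsub : G.neighborSet v ⊆ c.toSubgraph.neighborSet v := fun w hw =>
    Walk.adj_toSubgraph_iff_mem_edges.2 (hchord.mem_edges (hspan v) (hspan w) hw)
  have hle := Set.ncard_le_ncard hsub
  rw [hc.ncard_neighborSet_toSubgraph_eq_two c.start_mem_support] at hle
  exact (h3.two_lt_ncard_neighborSet v).not_ge hle

end ThreeConnected

/-- The outer vertex boundary of `B`: the vertices outside `B` with a neighbour in `B`. -/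
def outerBoundary (G : SimpleGraph V) (B : Set V) : Set V :=
  {n | n ∉ B ∧ ∃ b ∈ B, G.Adj n b}

/-- The vertices of attachment of `w` to `B`: the vertices of the outer boundary of `B` that can be
reached from `w` by a walk avoiding `B` and all other vertices of the boundary. -/
def attachments (G : SimpleGraph V) (B : Set V) (w : V) : Set V :=
  {n ∈ outerBoundary G B | ∃ r : G.Walk w n,
    ∀ x ∈ r.support, x ∉ B ∧ (x ∈ outerBoundary G B → x = n)}

lemma exists_mem_support_mem_attachments {B : Set V} {w b : V} (q : G.Walk w b) (hw : w ∉ B)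
    (hb : b ∈ B) : ∃ n ∈ q.support, n ∈ attachments G B w := by
  induction q with
  | nil => exact absurd hb hw
  | @cons w y b h q ih =>
    by_cases hwN : w ∈ outerBoundary G B
    · exact ⟨w, by simp, hwN, Walk.nil, by simpa using hw⟩
    have hy : y ∉ B := fun hy => hwN ⟨hw, y, hy, h⟩
    obtain ⟨n, hnq, hn, r, hr⟩ := ih hy hb
    refine ⟨n, by simp [hnq], hn, Walk.cons h r, ?_⟩
    rw [Walk.support_cons, List.forall_mem_cons]
    exact ⟨⟨hw, fun hw' => absurd hw' hwN⟩, hr⟩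

lemma ThreeConnected.two_lt_ncard_attachments [Fintype V] [DecidableEq V] (h3 : ThreeConnected G)
    {B : Set V} (hB : B.Nonempty) {w : V} (hw : w ∉ B) (hwN : w ∉ outerBoundary G B) :
    2 < (attachments G B w).ncard := by
  by_contra! hle
  obtain ⟨b, hb⟩ := hB
  have hwA : w ∈ (attachments G B w)ᶜ := fun h => hwN h.1
  have hbA : b ∈ (attachments G B w)ᶜ := fun h => h.1.1 hb
  obtain ⟨q, hq⟩ :=
    exists_walk_of_preconnected_induce (h3.connected_induce_compl hle).preconnected hwA hbA
  obtain ⟨n, hnq, hn⟩ := exists_mem_support_mem_attachments q hw hb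
  exact hq n hnq hn

lemma notMem_support_arcs_of_isCycle {a b d : V} {p : G.Walk a b} {q : G.Walk b d}
    {r : G.Walk d a} (hc : (p.append (q.append r)).IsCycle) (hab : a ≠ b) (hbd : b ≠ d)
    (hda : d ≠ a) : d ∉ p.support ∧ a ∉ q.support ∧ b ∉ r.support := by
  have hqr : (q.append r).IsPath := hc.isPath_of_append_right (Walk.not_nil_of_ne hab)
  rw [Walk.append_assoc] at hc
  have hpq : (p.append q).IsPath := hc.isPath_of_append_left (Walk.not_nil_of_ne hda)
  exact ⟨fun h => hpq.ne_of_mem_support_of_append hbd.symm h q.end_mem_support rfl,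
    fun h => hpq.ne_of_mem_support_of_append hab p.start_mem_support h rfl,
    fun h => hqr.ne_of_mem_support_of_append hbd q.start_mem_support h rfl⟩

lemma exists_arcs_of_isCycle {v a b d : V} {c : G.Walk v v} (hc : c.IsCycle) (ha : a ∈ c.support)
    (hb : b ∈ c.support) (hd : d ∈ c.support) (hab : a ≠ b) (hbd : b ≠ d) (hda : d ≠ a) :
    ∃ (p : G.Walk a b) (q : G.Walk b d) (r : G.Walk d a),
      (p.append (q.append r)).edges.Perm c.edges ∧
      (∀ x ∈ (p.append (q.append r)).support, x ∈ c.support) ∧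
      d ∉ p.support ∧ a ∉ q.support ∧ b ∉ r.support := by
  classical
  have hc' := hc.rotate ha
  have hperm := (c.rotate_edges a ha).perm
  have hsupp : ∀ x, x ∈ (c.rotate a ha).support ↔ x ∈ c.support :=
    fun x => c.mem_support_rotate_iff a ha
  generalize c.rotate a ha = c' at hc' hperm hsupp
  obtain ⟨p, q, rfl⟩ := Walk.mem_support_iff_exists_append.1 ((hsupp b).2 hb)
  rcases (Walk.mem_support_append_iff _ _).1 ((hsupp d).2 hd) with hdp | hdq
  · obtain ⟨p₁, p₂, rfl⟩ := Walk.mem_support_iff_exists_append.1 hdp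
    rw [← Walk.append_assoc] at hc' hperm hsupp
    obtain ⟨hb₁, ha₂, hdq⟩ := notMem_support_arcs_of_isCycle hc' hda.symm hbd.symm hab.symm
    have hrev : q.reverse.append (p₂.reverse.append p₁.reverse) =
        (p₁.append (p₂.append q)).reverse := by
      simp only [Walk.reverse_append, Walk.append_assoc]
    refine ⟨q.reverse, p₂.reverse, p₁.reverse, ?_, ?_, ?_⟩
    · rw [hrev, Walk.edges_reverse]
      exact (List.reverse_perm _).trans hperm
    · simpa only [hrev, Walk.support_reverse, List.mem_reverse] using fun x => (hsupp x).1
    · simpa only [Walk.support_reverse, List.mem_reverse] using ⟨hdq, ha₂, hb₁⟩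
  · obtain ⟨q₁, q₂, rfl⟩ := Walk.mem_support_iff_exists_append.1 hdq
    exact ⟨p, q₁, q₂, hperm, fun x => (hsupp x).1, notMem_support_arcs_of_isCycle hc' hab hbd hda⟩

lemma unbalancedOn_sdiff_singleton_of_arcs {X : Set V} {a b d w : V} {p : G.Walk a b}
    {q : G.Walk b d} {r : G.Walk d a} (hodd : Odd (negCount σ (p.append (q.append r))))
    (hp : ∀ x ∈ p.support, x ∈ X \ {d}) (hq : ∀ x ∈ q.support, x ∈ X \ {a})
    (hr : ∀ x ∈ r.support, x ∈ X \ {b}) {ra : G.Walk w a} {rb : G.Walk w b} {rd : G.Walk w d}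
    (hra : ∀ x ∈ ra.support, x ∈ X \ {b, d}) (hrb : ∀ x ∈ rb.support, x ∈ X \ {a, d})
    (hrd : ∀ x ∈ rd.support, x ∈ X \ {a, b}) :
    ∃ n ∈ ({a, b, d} : Set V), UnbalancedOn G σ (X \ {n}) := by
  have hclose {x y n : V} {s : G.Walk w x} {m : G.Walk x y} {t : G.Walk w y}
      (hs : ∀ z ∈ s.support, z ∈ X \ {n}) (hm : ∀ z ∈ m.support, z ∈ X \ {n})
      (ht : ∀ z ∈ t.support, z ∈ X \ {n}) (h : Odd (negCount σ s + negCount σ m + negCount σ t)) :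
      UnbalancedOn G σ (X \ {n}) := by
    refine ⟨w, s.append (m.append t.reverse), ?_, ?_⟩
    · simpa only [negCount_append, negCount_reverse, ← add_assoc] using h
    · simp only [Walk.mem_support_append_iff, Walk.support_reverse, List.mem_reverse]
      grind
  have hsum : Odd (negCount σ ra + negCount σ p + negCount σ rb) ∨
      Odd (negCount σ rb + negCount σ q + negCount σ rd) ∨
      Odd (negCount σ rd + negCount σ r + negCount σ ra) := by
    simp only [negCount_append] at hodd
    grind
  rcases hsum with h | h | h
  · exact ⟨d, by simp, hclose (by grind) hp (by grind) h⟩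
  · exact ⟨a, by simp, hclose (by grind) hq (by grind) h⟩
  · exact ⟨b, by simp, hclose (by grind) hr (by grind) h⟩

/-- `B` induces a connected subgraph and its complement is unbalanced. In a 3-connected graph the
complement of a maximal such `B` is the vertex set of a negative peripheral cycle. -/
structure ConnectedUnbalancedCompl (G : SimpleGraph V) (σ : Sym2 V → Bool) (B : Set V) : Prop where
  connected : (G.induce B).Connected
  unbalancedOn_compl : UnbalancedOn G σ Bᶜ

lemma ThreeConnected.exists_maximal_connectedUnbalancedCompl [Fintype V] [DecidableEq V]
    (h3 : ThreeConnected G) (h : UnbalancedOn G σ Set.univ) :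
    ∃ B, Maximal (ConnectedUnbalancedCompl G σ) B := by
  obtain ⟨v, c, hc⟩ := h.exists_isShortestNegativeOn
  obtain ⟨z, hz⟩ := h3.exists_notMem_support hc.isCycle hc.isChordless
  have hsingleton : ConnectedUnbalancedCompl G σ {z} := by
    refine ⟨?_, v, c, hc.odd, fun x hx hxz => hz (hxz ▸ hx)⟩
    rw [induce_singleton_eq_top]
    exact connected_top
  exact (Set.toFinite {B | ConnectedUnbalancedCompl G σ B}).exists_maximal ⟨{z}, hsingleton⟩

lemma not_unbalancedOn_compl_sdiff_singleton_of_maximal {B : Set V}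
    (hB : Maximal (ConnectedUnbalancedCompl G σ) B) {n : V} (hn : n ∈ outerBoundary G B) :
    ¬ UnbalancedOn G σ (Bᶜ \ {n}) := by
  obtain ⟨hnB, b, hb, hnb⟩ := hn
  intro h
  have hinsert : ConnectedUnbalancedCompl G σ (insert n B) := by
    constructor
    · rw [Set.insert_eq]
      exact connected_induce_union (by simp [Preconnected]) hB.prop.connected.preconnected
        (Set.mem_singleton n) hb hnb
    · rwa [Set.insert_eq, Set.union_comm, Set.compl_union, ← Set.sdiff_eq]
  exact hnB (hB.le_of_ge hinsert (Set.subset_insert n B) (Set.mem_insert n B))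

lemma mem_support_of_maximal {B : Set V} (hB : Maximal (ConnectedUnbalancedCompl G σ) B)
    {v : V} {c : G.Walk v v} (hodd : Odd (negCount σ c)) (hc : ∀ x ∈ c.support, x ∈ Bᶜ) {n : V}
    (hn : n ∈ outerBoundary G B) : n ∈ c.support := by
  by_contra hnc
  exact not_unbalancedOn_compl_sdiff_singleton_of_maximal hB hn
    ⟨v, c, hodd, fun x hx => ⟨hc x hx, fun hxn => hnc (hxn ▸ hx)⟩⟩

lemma compl_subset_outerBoundary_of_maximal [Fintype V] [DecidableEq V] {B : Set V}
    (hB : Maximal (ConnectedUnbalancedCompl G σ) B) (h3 : ThreeConnected G) :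
    Bᶜ ⊆ outerBoundary G B := by
  intro w hw
  by_contra hwN
  have hB_nonempty : B.Nonempty := Set.nonempty_coe_sort.1 hB.prop.connected.nonempty
  obtain ⟨a, ⟨ha, ra, hra⟩, b, ⟨hb, rb, hrb⟩, d, ⟨hd, rd, hrd⟩, hab, had, hbd⟩ :=
    (Set.two_lt_ncard).1 (h3.two_lt_ncard_attachments hB_nonempty hw hwN)
  obtain ⟨v, c, hc⟩ := hB.prop.unbalancedOn_compl.exists_isShortestNegativeOn
  have hmem {n : V} (hn : n ∈ outerBoundary G B) : n ∈ c.support :=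
    mem_support_of_maximal hB hc.odd hc.support_mem hn
  obtain ⟨p, q, r, hperm, hsupp, hdp, haq, hbr⟩ :=
    exists_arcs_of_isCycle hc.isCycle (hmem ha) (hmem hb) (hmem hd) hab hbd had.symm
  have harcs : ∀ x ∈ (p.append (q.append r)).support, x ∈ Bᶜ :=
    fun x hx => hc.support_mem x (hsupp x hx)
  simp only [Walk.mem_support_append_iff] at harcs
  have hleg {n : V} {l : G.Walk w n}
      (hl : ∀ x ∈ l.support, x ∉ B ∧ (x ∈ outerBoundary G B → x = n)) {m m' : V}
      (hm : m ∈ outerBoundary G B) (hm' : m' ∈ outerBoundary G B) (hmn : m ≠ n) (hmn' : m' ≠ n) :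
      ∀ x ∈ l.support, x ∈ Bᶜ \ {m, m'} := by
    grind
  obtain ⟨n, hn, hunbal⟩ := unbalancedOn_sdiff_singleton_of_arcs (X := Bᶜ)
    (negCount_eq_of_edges_perm hperm ▸ hc.odd) (by grind) (by grind) (by grind)
    (hleg hra hb hd hab.symm had.symm) (hleg hrb ha hd hab hbd.symm) (hleg hrd ha hb had hbd)
  have hnN : n ∈ outerBoundary G B := by
    rcases hn with rfl | rfl | rfl <;> assumption
  exact not_unbalancedOn_compl_sdiff_singleton_of_maximal hB hnN hunbal

lemma notMem_support_eq_of_maximal [Fintype V] [DecidableEq V] {B : Set V}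
    (hB : Maximal (ConnectedUnbalancedCompl G σ) B) (h3 : ThreeConnected G) {v : V}
    {c : G.Walk v v} (hc : IsShortestNegativeOn σ Bᶜ c) : {x | x ∉ c.support} = B := by
  ext x
  refine ⟨fun hx => ?_, fun hx hxc => hc.support_mem x hxc hx⟩
  by_contra hxB
  exact hx (mem_support_of_maximal hB hc.odd hc.support_mem
    (compl_subset_outerBoundary_of_maximal hB h3 hxB))

end

/-- a 3-connected unbalanced signed graph has a negative
peripheral cycle, i.e. an induced negative cycle `C` with `G − V(C)`
connected. -/
theorem exists_negative_peripheral_cycle {V : Type*} [Fintype V] [DecidableEq V]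
    (G : SimpleGraph V) (σ : Sym2 V → Bool)
    (h3 : ThreeConnected G)
    (hunbal : ∃ (v : V) (c : G.Walk v v), NegativeCycle G σ c) :
    ∃ (v : V) (c : G.Walk v v), NegativeCycle G σ c ∧
      (∀ u w, u ∈ c.support → w ∈ c.support → G.Adj u w → s(u, w) ∈ c.edges) ∧
      (G.induce {x | x ∉ c.support}).Connected := by
  obtain ⟨v₀, c₀, hc₀⟩ := hunbal
  obtain ⟨B, hB⟩ := h3.exists_maximal_connectedUnbalancedCompl
    ⟨v₀, c₀, hc₀.2, fun x _ => Set.mem_univ x⟩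
  obtain ⟨v, c, hc⟩ := hB.prop.unbalancedOn_compl.exists_isShortestNegativeOn
  have hB_eq : {x | x ∉ c.support} = B := notMem_support_eq_of_maximal hB h3 hc
  exact ⟨v, c, ⟨hc.isCycle, hc.odd⟩, fun u w hu hw huw => hc.isChordless.mem_edges hu hw huw,
    hB_eq ▸ hB.prop.connected⟩
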